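/- Let M be an n×n (0,1)-matrix which is the incidence matrix of a symmetric (n,k,λ) design, i.e., M·J = J·M = k·J and M·Mᵀ = Mᵀ·M = (k−λ)·I + λ·J, and let n' ≥ 1. Then M ⊗ J_{n'} is the adjacency matrix of a directed Deza graph of type II with parameters (nn', kn', kn', λn'); explicitly, with M' = M ⊗ J_{n'} one has M'·J = J·M' = kn'·J and M'·M'ᵀ = M'ᵀ·M' = λn'·X + kn'·Y + kn'·I, where Y = I_n ⊗ J_{n'} − I_{nn'} and X = J_{nn'} − I_n ⊗ J_{n'} are (0,1)-matrices with X + Y + I = J. -/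

import Mathlib

open Matrix Kronecker

/-- The all-ones square matrix over ℤ. -/
def allOnes (ι : Type*) : Matrix ι ι ℤ := Matrix.of fun _ _ => 1

/-- A (0,1)-matrix. -/
def IsZeroOne {ι κ : Type*} (M : Matrix ι κ ℤ) : Prop := ∀ i j, M i j = 0 ∨ M i j = 1

/-!
Since `J * J = |κ| • J`, the map `A ↦ A ⊗ₖ J` is multiplicative up to the factor `|κ|`. Hence
`M ⊗ₖ J` inherits its row sums, column sums and Gram matrices from `M`. The Gram matrix
`|κ| • ((k - l) • 1 + l • J) ⊗ₖ J` takes the value `k * |κ|` on pairs in the same fibre of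
`ι × κ → ι`, that is on the supports of `Y` and `1`, and `l * |κ|` on the support of `X`.
-/

variable {ι κ μ ν : Type*}

namespace IsZeroOne

theorem kronecker {A : Matrix ι κ ℤ} {B : Matrix μ ν ℤ} (hA : IsZeroOne A) (hB : IsZeroOne B) :
    IsZeroOne (A ⊗ₖ B) := by
  rintro ⟨i, j⟩ ⟨i', j'⟩
  rcases hA i i' with hA | hA <;> rcases hB j j' with hB | hB <;> simp [hA, hB]

theorem allOnes_sub {A : Matrix ι ι ℤ} (hA : IsZeroOne A) : IsZeroOne (allOnes ι - A) := by
  intro i j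
  rcases hA i j with h | h <;> simp [allOnes, h]

theorem sub_one [DecidableEq ι] {A : Matrix ι ι ℤ} (hA : IsZeroOne A)
    (hdiag : ∀ i, A i i = 1) : IsZeroOne (A - 1) := by
  intro i j
  rcases eq_or_ne i j with rfl | hij
  · simp [hdiag]
  · simpa [one_apply_ne hij] using hA i j

end IsZeroOne

theorem isZeroOne_allOnes : IsZeroOne (allOnes ι) := fun _ _ => Or.inr rfl

theorem isZeroOne_one [DecidableEq ι] : IsZeroOne (1 : Matrix ι ι ℤ) := by
  intro i j
  simpa only [one_apply] using (ite_eq_or_eq (i = j) (1 : ℤ) 0).symm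

theorem allOnes_mul_allOnes [Fintype κ] :
    allOnes κ * allOnes κ = (Fintype.card κ : ℤ) • allOnes κ := by
  ext i j
  simp [allOnes, mul_apply]

theorem allOnes_kronecker_allOnes : allOnes ι ⊗ₖ allOnes κ = allOnes (ι × κ) := by
  ext i j
  simp [allOnes]

theorem transpose_kronecker_allOnes (A : Matrix μ ν ℤ) :
    (A ⊗ₖ allOnes κ)ᵀ = Aᵀ ⊗ₖ allOnes κ :=
  rfl

theorem kronecker_allOnes_mul_kronecker_allOnes [Fintype κ] [Fintype ν]
    (A : Matrix μ ν ℤ) (B : Matrix ν ι ℤ) :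
    (A ⊗ₖ allOnes κ) * (B ⊗ₖ allOnes κ) = (Fintype.card κ : ℤ) • ((A * B) ⊗ₖ allOnes κ) := by
  rw [← mul_kronecker_mul, allOnes_mul_allOnes, kronecker_smul]

theorem kronecker_allOnes_mul_allOnes [Fintype ι] [Fintype κ] {A : Matrix ι ι ℤ} {k : ℤ}
    (hA : A * allOnes ι = k • allOnes ι) :
    (A ⊗ₖ allOnes κ) * allOnes (ι × κ) = (k * Fintype.card κ) • allOnes (ι × κ) := by
  rw [← allOnes_kronecker_allOnes, kronecker_allOnes_mul_kronecker_allOnes, hA, smul_kronecker,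
    smul_smul, mul_comm]

theorem allOnes_mul_kronecker_allOnes [Fintype ι] [Fintype κ] {A : Matrix ι ι ℤ} {k : ℤ}
    (hA : allOnes ι * A = k • allOnes ι) :
    allOnes (ι × κ) * (A ⊗ₖ allOnes κ) = (k * Fintype.card κ) • allOnes (ι × κ) := by
  rw [← allOnes_kronecker_allOnes, kronecker_allOnes_mul_kronecker_allOnes, hA, smul_kronecker,
    smul_smul, mul_comm]

theorem smul_one_add_smul_allOnes_kronecker_allOnes [DecidableEq ι] (k l : ℤ) :
    ((k - l) • (1 : Matrix ι ι ℤ) + l • allOnes ι) ⊗ₖ allOnes κ =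
      l • (allOnes (ι × κ) - (1 : Matrix ι ι ℤ) ⊗ₖ allOnes κ) +
        k • ((1 : Matrix ι ι ℤ) ⊗ₖ allOnes κ) := by
  rw [add_kronecker, smul_kronecker, smul_kronecker, allOnes_kronecker_allOnes]
  module

theorem kronecker_allOnes_mul_kronecker_allOnes_of_mul_eq [DecidableEq ι] [DecidableEq κ]
    [Fintype κ] [Fintype ν] {A : Matrix ι ν ℤ} {B : Matrix ν ι ℤ} {k l : ℤ}
    (hAB : A * B = (k - l) • (1 : Matrix ι ι ℤ) + l • allOnes ι) :
    (A ⊗ₖ allOnes κ) * (B ⊗ₖ allOnes κ) =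
      (l * Fintype.card κ) • (allOnes (ι × κ) - (1 : Matrix ι ι ℤ) ⊗ₖ allOnes κ) +
        (k * Fintype.card κ) • ((1 : Matrix ι ι ℤ) ⊗ₖ allOnes κ - 1) +
        (k * Fintype.card κ) • (1 : Matrix (ι × κ) (ι × κ) ℤ) := by
  rw [kronecker_allOnes_mul_kronecker_allOnes, hAB, smul_one_add_smul_allOnes_kronecker_allOnes]
  module

/-- if M is the incidence matrix of a symmetric (n,k,λ) design and n' ≥ 1,
then M ⊗ J_{n'} is the adjacency matrix of a directed Deza graph of type II with
parameters (nn', kn', kn', λn'), with explicit witnesses X = J − I_n ⊗ J_{n'} and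
Y = I_n ⊗ J_{n'} − I. -/
theorem deza_digraph_typeII_from_symmetric_design (n n' : ℕ) (k l : ℤ) (hn' : 1 ≤ n')
    (M : Matrix (Fin n) (Fin n) ℤ)
    (hM01 : IsZeroOne M)
    (hMJ : M * allOnes (Fin n) = k • allOnes (Fin n))
    (hJM : allOnes (Fin n) * M = k • allOnes (Fin n))
    (hMMt : M * Mᵀ = (k - l) • (1 : Matrix (Fin n) (Fin n) ℤ) + l • allOnes (Fin n))
    (hMtM : Mᵀ * M = (k - l) • (1 : Matrix (Fin n) (Fin n) ℤ) + l • allOnes (Fin n))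
    (M' : Matrix (Fin n × Fin n') (Fin n × Fin n') ℤ)
    (hM' : M' = M ⊗ₖ allOnes (Fin n'))
    (X Y : Matrix (Fin n × Fin n') (Fin n × Fin n') ℤ)
    (hX : X = allOnes (Fin n × Fin n') -
      (1 : Matrix (Fin n) (Fin n) ℤ) ⊗ₖ allOnes (Fin n'))
    (hY : Y = (1 : Matrix (Fin n) (Fin n) ℤ) ⊗ₖ allOnes (Fin n') - 1) :
    IsZeroOne M' ∧ IsZeroOne X ∧ IsZeroOne Y ∧
    X + Y + 1 = allOnes (Fin n × Fin n') ∧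
    M' * allOnes (Fin n × Fin n') = (k * (n' : ℤ)) • allOnes (Fin n × Fin n') ∧
    allOnes (Fin n × Fin n') * M' = (k * (n' : ℤ)) • allOnes (Fin n × Fin n') ∧
    M' * M'ᵀ = (l * (n' : ℤ)) • X + (k * (n' : ℤ)) • Y +
      (k * (n' : ℤ)) • (1 : Matrix (Fin n × Fin n') (Fin n × Fin n') ℤ) ∧
    M'ᵀ * M' = (l * (n' : ℤ)) • X + (k * (n' : ℤ)) • Y +
      (k * (n' : ℤ)) • (1 : Matrix (Fin n × Fin n') (Fin n × Fin n') ℤ) := by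
  subst hM' hX hY
  have hblock : IsZeroOne ((1 : Matrix (Fin n) (Fin n) ℤ) ⊗ₖ allOnes (Fin n')) :=
    isZeroOne_one.kronecker isZeroOne_allOnes
  have hdiag (i) : ((1 : Matrix (Fin n) (Fin n) ℤ) ⊗ₖ allOnes (Fin n')) i i = 1 := by
    simp [allOnes]
  rw [transpose_kronecker_allOnes]
  refine ⟨hM01.kronecker isZeroOne_allOnes, hblock.allOnes_sub, hblock.sub_one hdiag,
    by abel, ?_, ?_, ?_, ?_⟩
  · simpa only [Fintype.card_fin] using kronecker_allOnes_mul_allOnes (κ := Fin n') hMJ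
  · simpa only [Fintype.card_fin] using allOnes_mul_kronecker_allOnes (κ := Fin n') hJM
  · simpa only [Fintype.card_fin] using
      kronecker_allOnes_mul_kronecker_allOnes_of_mul_eq (κ := Fin n') hMMt
  · simpa only [Fintype.card_fin] using
      kronecker_allOnes_mul_kronecker_allOnes_of_mul_eq (κ := Fin n') hMtM
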